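/- Let α ≥ 0 be real, let δ > 0 be real, let n ∈ ℕ (n ≥ 0), and let t ∈ (0, π]. Then F_n^{(α,0),δ}(t) = 2^{2α+δ+1} a_n^α F_{2n}^{(α,α),δ}(t/2), where a_n^α = (2n)! (α+1/2)_n / (n! (α+1/2)_{2n}) and (a)_m = a(a+1)···(a+m-1) is the Pochhammer symbol. -/

import Mathlib

open MeasureTheory Real Set

/-- Generalized binomial coefficient `C(u, v) = Γ(u+1) / (Γ(v+1) Γ(u-v+1))`. -/
noncomputable def genBinom (u v : ℝ) : ℝ :=
  Real.Gamma (u + 1) / (Real.Gamma (v + 1) * Real.Gamma (u - v + 1))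

/-- Jacobi polynomial `P_n^{(a,b)}(x)`. -/
noncomputable def jacobiP (n : ℕ) (a b x : ℝ) : ℝ :=
  ∑ k ∈ Finset.range (n + 1),
    genBinom ((n : ℝ) + a) ((n : ℝ) - (k : ℝ)) * genBinom ((n : ℝ) + b) (k : ℝ) *
      ((x - 1) / 2) ^ k * ((x + 1) / 2) ^ (n - k)

/-- `F_n^{(α,β),δ}(t)`. -/
noncomputable def FJ (n : ℕ) (α β δ t : ℝ) : ℝ :=
  ∫ θ in (0:ℝ)..t, (t - θ) ^ δ * jacobiP n (α - 1/2) (β - 1/2) (Real.cos θ) *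
    (Real.sin (θ / 2)) ^ (2 * α) * (Real.cos (θ / 2)) ^ (2 * β)

/-- Pochhammer symbol `(a)_m = a (a+1) ⋯ (a+m-1)`. -/
noncomputable def poch (a : ℝ) (m : ℕ) : ℝ := Polynomial.eval a (ascPochhammer ℝ m)

/-!
Put `u = (x - 1) / 2` and `v = (x + 1) / 2`, so that `u + v = x` and `4uv = x² - 1`. In the
expansion of `P_m^{(a,a)}(x)` into monomials `u^i v^j` the coefficients resolve by the
Chu–Vandermonde identity into a sum over powers of `uv`; what remains is a binomial expansion of
powers of `u + v`, whence
`P_m^{(a,a)}(x) = (a+1)_m ∑_k (uv)^k / ((a+1)_k k!) · x^{m-2k} / (m-2k)!`.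
Since `(1/2)_l = (2l)! / (4^l l!)`, the defining sum of `P_n^{(a,-1/2)}(2x² - 1)` is a multiple of
the same expression with `m = 2n`. The substitution `θ ↦ 2θ` together with
`sin θ = 2 sin (θ/2) cos (θ/2)` carries this proportionality over to the integrals.
-/

open Finset.HasAntidiagonal (antidiagonal)
open scoped Nat

theorem poch_succ (c : ℝ) (m : ℕ) : poch c (m + 1) = poch c m * (c + m) :=
  ascPochhammer_succ_eval m c

theorem poch_ne_zero {c : ℝ} (hc : ∀ k : ℕ, c ≠ -k) (m : ℕ) : poch c m ≠ 0 := by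
  rw [poch, Ne, ascPochhammer_eval_eq_zero_iff]
  rintro ⟨k, -, hk⟩
  exact hc k (by linarith)

theorem poch_mul_poch_add (c : ℝ) (m k : ℕ) : poch c m * poch (c + m) k = poch c (m + k) := by
  simpa [poch] using congrArg (Polynomial.eval c) (ascPochhammer_mul ℝ m k)

theorem poch_mul_Gamma {c : ℝ} (hc : ∀ k : ℕ, c ≠ -k) (m : ℕ) :
    poch c m * Real.Gamma c = Real.Gamma (c + m) := by
  induction m with
  | zero => simp [poch]
  | succ m ih =>
    have hcm : c + m ≠ 0 := fun h => hc m (eq_neg_of_add_eq_zero_left h)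
    rw [poch_succ, Nat.cast_succ, ← add_assoc, Real.Gamma_add_one hcm, ← ih]
    ring

theorem poch_half (n : ℕ) : poch (1 / 2) n = (2 * n)! / (4 ^ n * n !) := by
  induction n with
  | zero => simp [poch]
  | succ n ih =>
    rw [poch_succ, ih, mul_add_one, Nat.factorial_succ, Nat.factorial_succ, Nat.factorial_succ]
    push_cast
    field_simp
    ring

theorem ringChoose_eq_poch_div (u : ℝ) (k : ℕ) : Ring.choose u k = poch (u - k + 1) k / k ! := by
  have h := Ring.factorial_nsmul_multichoose_eq_ascPochhammer (u - k + 1) k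
  rw [Polynomial.ascPochhammer_smeval_eq_eval, nsmul_eq_mul] at h
  rw [Ring.choose, poch, ← h]
  field_simp

theorem poch_add_natCast_div_factorial (c : ℝ) (i j : ℕ) :
    poch (c + j) i / i ! =
      ∑ p ∈ antidiagonal i, (j.choose p.1 : ℝ) * (poch (c + p.1) p.2 / p.2 !) := by
  have h := Ring.add_choose_eq i (Commute.all (j : ℝ) (c + i - 1))
  rw [ringChoose_eq_poch_div, show (j : ℝ) + (c + i - 1) - i + 1 = c + j by ring] at h
  rw [h]
  refine Finset.sum_congr rfl fun p hp => ?_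
  rw [Ring.choose_natCast, ringChoose_eq_poch_div, ← Finset.HasAntidiagonal.mem_antidiagonal.mp hp]
  push_cast
  ring_nf

theorem sum_one_div_poch_mul_factorial {c : ℝ} (hc : ∀ k : ℕ, c ≠ -k) (i j : ℕ) :
    ∑ k ∈ Finset.range (min i j + 1), 1 / (poch c k * k ! * (i - k)! * (j - k)!) =
      poch c (i + j) / (i ! * j ! * poch c i * poch c j) := by
  have hne := poch_ne_zero hc
  calc
    _ = ∑ k ∈ Finset.range (min i j + 1),
          (j.choose k : ℝ) * (poch (c + k) (i - k) / (i - k)!) / (j ! * poch c i) := by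
        refine Finset.sum_congr rfl fun k hk => ?_
        obtain ⟨hi, hj⟩ : k ≤ i ∧ k ≤ j := by grind
        have hsplit := poch_mul_poch_add c k (i - k)
        rw [Nat.add_sub_cancel' hi] at hsplit
        have := hne k
        have := right_ne_zero_of_mul (hsplit.symm ▸ hne i)
        rw [Nat.cast_choose ℝ hj, ← hsplit]
        field_simp
    _ = ∑ k ∈ Finset.range (i + 1),
          (j.choose k : ℝ) * (poch (c + k) (i - k) / (i - k)!) / (j ! * poch c i) := by
        refine Finset.sum_subset (by grind) fun k _ hk => ?_
        rw [Nat.choose_eq_zero_of_lt (by grind)]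
        simp
    _ = poch (c + j) i / i ! / (j ! * poch c i) := by
        rw [poch_add_natCast_div_factorial, Finset.Nat.sum_antidiagonal_eq_sum_range_succ_mk,
          Finset.sum_div]
    _ = _ := by
        rw [add_comm i j, ← poch_mul_poch_add]
        have := hne j
        field_simp

theorem sum_antidiagonal_sum_range_min {M : Type*} [AddCommMonoid M] (f : ℕ → ℕ × ℕ → M)
    (m : ℕ) :
    ∑ p ∈ antidiagonal m, ∑ k ∈ Finset.range (min p.1 p.2 + 1), f k (p.1 - k, p.2 - k) =
      ∑ k ∈ Finset.range (m / 2 + 1), ∑ q ∈ antidiagonal (m - 2 * k), f k q := by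
  rw [Finset.sum_sigma', Finset.sum_sigma']
  refine Finset.sum_bij' (fun x _ => ⟨x.2, (x.1.1 - x.2, x.1.2 - x.2)⟩)
    (fun y _ => ⟨(y.2.1 + y.1, y.2.2 + y.1), y.1⟩) ?_ ?_ ?_ ?_ ?_ <;>
    grind [Finset.HasAntidiagonal.mem_antidiagonal]

theorem add_pow_div_factorial (u v : ℝ) (m : ℕ) :
    (u + v) ^ m / m ! = ∑ p ∈ antidiagonal m, u ^ p.1 / p.1 ! * (v ^ p.2 / p.2 !) := by
  rw [(Commute.all u v).add_pow', Finset.sum_div]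
  refine Finset.sum_congr rfl fun p hp => ?_
  rw [← Finset.HasAntidiagonal.mem_antidiagonal.mp hp, nsmul_eq_mul, Nat.cast_add_choose]
  field_simp

theorem genBinom_natCast_add {a : ℝ} (ha : ∀ k : ℕ, a + 1 ≠ -k) (i j : ℕ) :
    genBinom ((i + j : ℕ) + a) j = poch (a + 1) (i + j) / (j ! * poch (a + 1) i) := by
  have hΓ := Real.Gamma_ne_zero ha
  have hi := poch_ne_zero ha i
  rw [genBinom, Real.Gamma_nat_eq_factorial,
    show ((i + j : ℕ) : ℝ) + a + 1 = a + 1 + (i + j : ℕ) by ring,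
    show ((i + j : ℕ) : ℝ) + a - j + 1 = a + 1 + i by push_cast; ring,
    ← poch_mul_Gamma ha, ← poch_mul_Gamma ha]
  field_simp

theorem jacobiP_eq_sum_antidiagonal {a b : ℝ} (ha : ∀ k : ℕ, a + 1 ≠ -k)
    (hb : ∀ k : ℕ, b + 1 ≠ -k) (n : ℕ) (x : ℝ) :
    jacobiP n a b x = poch (a + 1) n * poch (b + 1) n * ∑ p ∈ antidiagonal n,
      ((x - 1) / 2) ^ p.1 * ((x + 1) / 2) ^ p.2 /
        (p.1 ! * p.2 ! * poch (a + 1) p.1 * poch (b + 1) p.2) := by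
  rw [jacobiP, Finset.mul_sum, Finset.Nat.sum_antidiagonal_eq_sum_range_succ_mk]
  refine Finset.sum_congr rfl fun k hk => ?_
  obtain ⟨l, rfl⟩ := Nat.exists_eq_add_of_le (Finset.mem_range_succ_iff.mp hk)
  have hl : ((k + l : ℕ) : ℝ) - k = l := by push_cast; ring
  rw [hl, genBinom_natCast_add ha, Nat.add_sub_cancel_left, add_comm k l,
    genBinom_natCast_add hb]
  ring

theorem jacobiP_self_eq_sum {a : ℝ} (ha : ∀ k : ℕ, a + 1 ≠ -k) (m : ℕ) (x : ℝ) :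
    jacobiP m a a x = poch (a + 1) m * ∑ k ∈ Finset.range (m / 2 + 1),
      ((x ^ 2 - 1) / 4) ^ k / (poch (a + 1) k * k !) * (x ^ (m - 2 * k) / (m - 2 * k)!) := by
  set u := (x - 1) / 2 with hu
  set v := (x + 1) / 2 with hv
  have huv : (x ^ 2 - 1) / 4 = u * v := by rw [hu, hv]; ring
  have hx : x = u + v := by rw [hu, hv]; ring
  have hne := poch_ne_zero ha
  rw [jacobiP_eq_sum_antidiagonal ha ha, mul_assoc, Finset.mul_sum, ← hu, ← hv, huv]
  congr 1
  calc
    _ = ∑ p ∈ antidiagonal m, ∑ k ∈ Finset.range (min p.1 p.2 + 1),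
          (u * v) ^ k / (poch (a + 1) k * k !) *
            (u ^ (p.1 - k) / (p.1 - k)! * (v ^ (p.2 - k) / (p.2 - k)!)) := by
        refine Finset.sum_congr rfl fun p hp => ?_
        rw [mul_div_left_comm, ← Finset.HasAntidiagonal.mem_antidiagonal.mp hp,
          ← sum_one_div_poch_mul_factorial ha, Finset.mul_sum]
        refine Finset.sum_congr rfl fun k hk => ?_
        obtain ⟨h1, h2⟩ : k ≤ p.1 ∧ k ≤ p.2 := by grind
        rw [← pow_mul_pow_sub u h1, ← pow_mul_pow_sub v h2, mul_pow]
        have := hne k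
        field_simp
    _ = ∑ k ∈ Finset.range (m / 2 + 1), ∑ q ∈ antidiagonal (m - 2 * k),
          (u * v) ^ k / (poch (a + 1) k * k !) * (u ^ q.1 / q.1 ! * (v ^ q.2 / q.2 !)) :=
        sum_antidiagonal_sum_range_min
          (fun k q => (u * v) ^ k / (poch (a + 1) k * k !) *
            (u ^ q.1 / q.1 ! * (v ^ q.2 / q.2 !))) m
    _ = _ := by
        simp only [← Finset.mul_sum, ← add_pow_div_factorial, ← hx]

theorem jacobiP_neg_half_two_mul_sq_sub_one {a : ℝ} (ha : ∀ k : ℕ, a + 1 ≠ -k) (n : ℕ) (x : ℝ) :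
    jacobiP n a (-1 / 2) (2 * x ^ 2 - 1) =
      (2 * n)! * poch (a + 1) n / n ! * ∑ k ∈ Finset.range (n + 1),
        ((x ^ 2 - 1) / 4) ^ k / (poch (a + 1) k * k !) *
          (x ^ (2 * (n - k)) / (2 * (n - k))!) := by
  have hhalf : ∀ k : ℕ, (-1 / 2 : ℝ) + 1 ≠ -k := fun k => by
    have : (0 : ℝ) ≤ k := k.cast_nonneg
    linarith
  rw [jacobiP_eq_sum_antidiagonal ha hhalf, Finset.Nat.sum_antidiagonal_eq_sum_range_succ_mk,
    Finset.mul_sum, Finset.mul_sum]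
  refine Finset.sum_congr rfl fun k hk => ?_
  obtain ⟨l, rfl⟩ := Nat.exists_eq_add_of_le (Finset.mem_range_succ_iff.mp hk)
  have hk := poch_ne_zero ha k
  rw [Nat.add_sub_cancel_left, show (-1 / 2 : ℝ) + 1 = 1 / 2 by norm_num, poch_half, poch_half,
    show (2 * x ^ 2 - 1 - 1) / 2 = 4 * ((x ^ 2 - 1) / 4) by ring,
    show (2 * x ^ 2 - 1 + 1) / 2 = x ^ 2 by ring, mul_pow, ← pow_mul, pow_add (4 : ℝ)]
  field_simp

theorem jacobiP_quadratic_transform {a : ℝ} (ha : ∀ k : ℕ, a + 1 ≠ -k) (n : ℕ) (x : ℝ) :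
    jacobiP n a (-1 / 2) (2 * x ^ 2 - 1) =
      (2 * n)! * poch (a + 1) n / (n ! * poch (a + 1) (2 * n)) * jacobiP (2 * n) a a x := by
  have := poch_ne_zero ha (2 * n)
  rw [jacobiP_neg_half_two_mul_sq_sub_one ha, jacobiP_self_eq_sum ha,
    Nat.mul_div_cancel_left n two_pos]
  simp only [Nat.mul_sub]
  field_simp

theorem sin_rpow_eq_two_rpow_mul {θ : ℝ} (hθ : θ ∈ Icc 0 π) (s : ℝ) :
    sin θ ^ s = 2 ^ s * (sin (θ / 2) ^ s * cos (θ / 2) ^ s) := by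
  obtain ⟨h0, hπ⟩ := hθ
  have hsin : 0 ≤ sin (θ / 2) := sin_nonneg_of_nonneg_of_le_pi (by linarith) (by linarith)
  have hcos : 0 ≤ cos (θ / 2) := cos_nonneg_of_neg_pi_div_two_le_of_le (by linarith) (by linarith)
  rw [← mul_rpow hsin hcos, ← mul_rpow zero_le_two (mul_nonneg hsin hcos), ← mul_assoc,
    ← sin_two_mul, mul_div_cancel₀ θ two_ne_zero]

theorem FJ_zero_right_eq_two_mul_integral (n : ℕ) (α δ t : ℝ) :
    FJ n α 0 δ t = 2 * ∫ θ in (0 : ℝ)..t / 2,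
      (t - 2 * θ) ^ δ * jacobiP n (α - 1 / 2) (-1 / 2) (2 * cos θ ^ 2 - 1) * sin θ ^ (2 * α) := by
  have hsubst := intervalIntegral.mul_integral_comp_mul_left (a := 0) (b := t / 2) (c := (2 : ℝ))
    (f := fun θ => (t - θ) ^ δ * jacobiP n (α - 1 / 2) (0 - 1 / 2) (cos θ) *
      sin (θ / 2) ^ (2 * α) * cos (θ / 2) ^ (2 * (0 : ℝ)))
  simp only [mul_zero, mul_div_cancel₀ t two_ne_zero, cos_two_mul,
    mul_div_cancel_left₀ _ (two_ne_zero (α := ℝ)), rpow_zero, mul_one, zero_sub, ← neg_div]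
    at hsubst
  simp only [FJ, mul_zero, rpow_zero, mul_one, zero_sub, ← neg_div, hsubst]

theorem FJ_quadratic_transform_general {α δ t : ℝ} (hα : -1 / 2 < α) (_hδ : -1 < δ) (n : ℕ)
    (ht : t ∈ Ico 0 (2 * π)) :
    FJ n α 0 δ t =
      2 ^ (2 * α + δ + 1) *
        ((2 * n)! * poch (α + 1 / 2) n / (n ! * poch (α + 1 / 2) (2 * n))) *
        FJ (2 * n) α α δ (t / 2) := by
  have ha : ∀ k : ℕ, α - 1 / 2 + 1 ≠ -k := fun k => by
    have : (0 : ℝ) ≤ k := k.cast_nonneg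
    linarith
  obtain ⟨ht0, htπ⟩ := ht
  rw [FJ_zero_right_eq_two_mul_integral, FJ, ← intervalIntegral.integral_const_mul,
    ← intervalIntegral.integral_const_mul]
  refine intervalIntegral.integral_congr fun θ hθ => ?_
  obtain ⟨hθ0, hθt⟩ : 0 ≤ θ ∧ θ ≤ t / 2 := by rwa [uIcc_of_le (by linarith)] at hθ
  have hkernel : (t - 2 * θ) ^ δ = 2 ^ δ * (t / 2 - θ) ^ δ := by
    rw [← mul_rpow zero_le_two (by linarith)]
    ring_nf
  have hconst : (2 : ℝ) ^ (2 * α + δ + 1) = 2 ^ (2 * α) * 2 ^ δ * 2 := by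
    rw [rpow_add_one two_ne_zero, rpow_add two_pos]
  rw [hkernel, jacobiP_quadratic_transform ha, sin_rpow_eq_two_rpow_mul ⟨hθ0, by linarith⟩, hconst,
    show α - 1 / 2 + 1 = α + 1 / 2 by ring]
  ring

theorem FJ_quadratic_transform (α : ℝ) (hα : 0 ≤ α) (δ : ℝ) (hδ : 0 < δ) (n : ℕ)
    (t : ℝ) (ht : t ∈ Set.Ioc (0:ℝ) π) :
    FJ n α 0 δ t =
      (2:ℝ) ^ (2 * α + δ + 1) *
        ((Nat.factorial (2 * n) : ℝ) * poch (α + 1/2) n /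
          ((Nat.factorial n : ℝ) * poch (α + 1/2) (2 * n))) *
        FJ (2 * n) α α δ (t / 2) :=
  FJ_quadratic_transform_general (by linarith) (by linarith) n ⟨ht.1.le, by linarith [ht.2, pi_pos]⟩
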